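/- arXiv:2603.21831 — 8 statements merged into one kernel-verified Lean document; each statement's English description precedes it below -/
import Mathlib

section
/- Let f : ℝ^n → ℝ be locally Lipschitz and let φ be a nonnegative mollifier on ℝ^n with supp φ equal to the closed unit ball. Then the directional mollification converges pointwise: for every x ∈ ℝ^n, F̂_ε(x) → f(x) as ε → 0⁺. -/
open MeasureTheory Filter Topology Metric

noncomputable section

abbrev Euc (n : ℕ) := EuclideanSpace ℝ (Fin n)

/-- The scaled mollifier `φ_ε(x) = ε^{-n} φ(x/ε)` on `ℝ^n`. -/
def mollScaled (n : ℕ) (ε : ℝ) (φ : Euc n → ℝ) : Euc n → ℝ :=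
  fun x => (ε ^ n)⁻¹ * φ (ε⁻¹ • x)

theorem stmt1 (n : ℕ) (f : Euc n → ℝ)
    -- `f` is locally Lipschitz
    (hf : LocallyLipschitz f)
    -- `φ` is a nonnegative mollifier supported in the closed unit ball
    (φ : Euc n → ℝ) (hφ_smooth : ContDiff ℝ (⊤ : ℕ∞) φ)
    (hφ_int : ∫ x, φ x = 1) (hφ_nonneg : ∀ x, 0 ≤ φ x)
    (hφ_supp : tsupport φ = closedBall (0 : Euc n) 1)
    -- `fdir s h` is the one-sided directional derivative `f°(s)(h)` (exists a.e.)
    (fdir : Euc n → Euc n → ℝ)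
    (hfdir : ∀ᵐ s ∂(volume : Measure (Euc n)), ∀ h : Euc n,
      Tendsto (fun t : ℝ => (f (s + t • h) - f s) / t) (𝓝[>] 0) (𝓝 (fdir s h)))
    (x : Euc n) :
    -- pointwise convergence of the directional mollification `F̂_ε = F_ε + D_ε` to `f`
    Tendsto (fun ε : ℝ =>
        (∫ s, f s * mollScaled n ε φ (x - s))
          + ∫ s, fdir s (x - s) * mollScaled n ε φ (x - s))
      (𝓝[>] 0) (𝓝 (f x)) := by
  obtain ⟨K, t, ht, hK⟩ := hf x
  obtain ⟨r, hr, hrt⟩ := Metric.mem_nhds_iff.1 ht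
  have hcs : HasCompactSupport φ := by
    rw [HasCompactSupport, hφ_supp]; exact isCompact_closedBall _ _
  have hφc : Continuous φ := hφ_smooth.continuous
  have key : ∀ᶠ ε : ℝ in 𝓝[>] 0, dist ((∫ s, f s * mollScaled n ε φ (x - s))
          + ∫ s, fdir s (x - s) * mollScaled n ε φ (x - s)) (f x) ≤ 2 * K * ε := by
    filter_upwards [Ioo_mem_nhdsGT hr] with ε hε
    obtain ⟨hε0, hεr⟩ := hε
    set ψ : Euc n → ℝ := fun s => mollScaled n ε φ (x - s) with hψ
    have hψc : Continuous ψ := by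
      simp only [hψ, mollScaled]
      fun_prop
    have hψ0 : ∀ s, 0 ≤ ψ s := fun s =>
      mul_nonneg (inv_nonneg.2 (pow_nonneg hε0.le _)) (hφ_nonneg _)
    have hψs : ∀ s, ψ s ≠ 0 → ‖x - s‖ ≤ ε := by
      intro s hs
      have h1 : φ (ε⁻¹ • (x - s)) ≠ 0 := right_ne_zero_of_mul hs
      have h2 : ε⁻¹ • (x - s) ∈ closedBall (0 : Euc n) 1 := by
        rw [← hφ_supp]; exact subset_tsupport _ h1
      rw [mem_closedBall_zero_iff, norm_smul, Real.norm_eq_abs, abs_of_pos (inv_pos.2 hε0),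
        inv_mul_le_iff₀ hε0, mul_one] at h2
      exact h2
    have hψcs : HasCompactSupport ψ := by
      refine HasCompactSupport.intro (isCompact_closedBall x ε) ?_
      intro s hs
      by_contra h
      apply hs
      rw [mem_closedBall, dist_comm, dist_eq_norm]
      exact hψs s h
    have hψi : Integrable ψ := hψc.integrable_of_hasCompactSupport hψcs
    have hψ1 : ∫ s, ψ s = 1 := by
      simp only [hψ]
      rw [integral_sub_left_eq_self (mollScaled n ε φ) volume x]
      simp only [mollScaled]
      rw [integral_const_mul, Measure.integral_comp_smul, hφ_int]
      have : 0 < ε ^ n := pow_pos hε0 n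
      simp only [finrank_euclideanSpace, Fintype.card_fin, smul_eq_mul, mul_one, inv_pow, inv_inv]
      rw [abs_of_pos this, inv_mul_cancel₀ this.ne']
    have hfi : Integrable (fun s => f s * ψ s) :=
      (hf.continuous.mul hψc).integrable_of_hasCompactSupport hψcs.mul_left
    have hgi : Integrable (fun s => K * ε * ψ s) := hψi.const_mul _
    have hg1 : ∫ s, K * ε * ψ s = K * ε := by rw [integral_const_mul, hψ1, mul_one]
    have hxt : x ∈ t := mem_of_mem_nhds ht
    have hlip : ∀ a ∈ ball x r, ∀ b ∈ ball x r, |f a - f b| ≤ K * ‖a - b‖ := by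
      intro a ha b hb
      have := hK.dist_le_mul a (hrt ha) b (hrt hb)
      rwa [Real.dist_eq, dist_eq_norm] at this
    have hsb : ∀ s, ψ s ≠ 0 → s ∈ ball x r := by
      intro s hs
      rw [mem_ball, dist_comm, dist_eq_norm]
      exact (hψs s hs).trans_lt hεr
    have e1 : |(∫ s, f s * ψ s) - f x| ≤ K * ε := by
      have : (∫ s, f s * ψ s) - f x = ∫ s, (f s * ψ s - f x * ψ s) := by
        rw [integral_sub hfi (hψi.const_mul _), integral_const_mul, hψ1, mul_one]
      rw [this, ← Real.norm_eq_abs, ← hg1]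
      refine norm_integral_le_of_norm_le hgi (Eventually.of_forall fun s => ?_)
      rw [← sub_mul, norm_mul, Real.norm_eq_abs, Real.norm_eq_abs, abs_of_nonneg (hψ0 s)]
      by_cases h : ψ s = 0
      · simp [h]
      refine mul_le_mul_of_nonneg_right ?_ (hψ0 s)
      refine (hlip s (hsb s h) x (mem_ball_self hr)).trans ?_
      rw [norm_sub_rev]
      exact mul_le_mul_of_nonneg_left (hψs s h) K.2
    have e2 : |∫ s, fdir s (x - s) * ψ s| ≤ K * ε := by
      rw [← Real.norm_eq_abs, ← hg1]
      refine norm_integral_le_of_norm_le hgi ?_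
      filter_upwards [hfdir] with s hs
      rw [norm_mul, Real.norm_eq_abs, Real.norm_eq_abs, abs_of_nonneg (hψ0 s)]
      by_cases h : ψ s = 0
      · simp [h]
      refine mul_le_mul_of_nonneg_right ?_ (hψ0 s)
      refine le_trans ?_ (mul_le_mul_of_nonneg_left (hψs s h) K.2)
      refine le_of_tendsto (hs (x - s)).abs ?_
      have hc : Tendsto (fun u : ℝ => s + u • (x - s)) (𝓝[>] 0) (𝓝 s) := by
        have : Continuous (fun u : ℝ => s + u • (x - s)) := by fun_prop
        have h3 := this.tendsto 0
        simp only [zero_smul, add_zero] at h3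
        exact h3.mono_left nhdsWithin_le_nhds
      filter_upwards [hc (isOpen_ball.mem_nhds (hsb s h)), self_mem_nhdsWithin] with u hu hu0
      have hu0' : (0 : ℝ) < u := hu0
      rw [abs_div, abs_of_pos hu0', div_le_iff₀ hu0']
      refine (hlip _ hu s (hsb s h)).trans (le_of_eq ?_)
      rw [add_sub_cancel_left, norm_smul, Real.norm_eq_abs, abs_of_pos hu0']
      ring
    rw [Real.dist_eq]
    rw [abs_le] at *
    constructor <;> linarith [e1.1, e1.2, e2.1, e2.2]
  rw [tendsto_iff_dist_tendsto_zero]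
  refine squeeze_zero' (Eventually.of_forall fun _ => dist_nonneg) key ?_
  have : Continuous (fun ε : ℝ => 2 * (K : ℝ) * ε) := by fun_prop
  have h3 := this.tendsto 0
  simp only [mul_zero] at h3
  exact h3.mono_left nhdsWithin_le_nhds
end
end

section
/- Let f : ℝ^n → ℝ be globally Lipschitz with Lipschitz constant L and let φ be a nonnegative mollifier on ℝ^n with supp φ equal to the closed unit ball. Then for every ε > 0 and every x ∈ ℝ^n the directional derivative term satisfies |D_ε(x)| ≤ L·ε, and consequently F̂_ε → f uniformly on compact subsets of ℝ^n as ε → 0⁺. -/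
open MeasureTheory Filter Topology Metric

noncomputable section

theorem mollScaled_facts (n : ℕ) (φ : Euc n → ℝ) (hc : Continuous φ)
    (hφ_int : ∫ x, φ x = 1) (hφ_nonneg : ∀ x, 0 ≤ φ x)
    (hφ_supp : tsupport φ = closedBall (0 : Euc n) 1) (ε : ℝ) (hε : 0 < ε) (x : Euc n) :
    (∀ s, 0 ≤ mollScaled n ε φ (x - s)) ∧ (∀ s, ε < ‖x - s‖ → mollScaled n ε φ (x - s) = 0) ∧
    Continuous (fun s => mollScaled n ε φ (x - s)) ∧
    HasCompactSupport (fun s => mollScaled n ε φ (x - s)) ∧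
    ∫ s, mollScaled n ε φ (x - s) = 1 := by
  have h0 : ∀ s, ε < ‖x - s‖ → mollScaled n ε φ (x - s) = 0 := by
    intro s hs
    have : φ (ε⁻¹ • (x - s)) = 0 := by
      apply image_eq_zero_of_notMem_tsupport
      rw [hφ_supp, mem_closedBall_zero_iff, norm_smul, norm_inv, Real.norm_of_nonneg hε.le,
        not_le, inv_mul_eq_div, lt_div_iff₀ hε]
      simpa using hs
    simp [mollScaled, this]
  refine ⟨fun s => ?_, h0, ?_, ?_, ?_⟩
  · exact mul_nonneg (by positivity) (hφ_nonneg _)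
  · unfold mollScaled
    fun_prop
  · refine HasCompactSupport.intro (isCompact_closedBall x ε) fun s hs => h0 s ?_
    rw [mem_closedBall, not_le, dist_comm, dist_eq_norm] at hs
    exact hs
  · rw [integral_sub_left_eq_self (fun s => mollScaled n ε φ s) volume x]
    unfold mollScaled
    rw [integral_const_mul, Measure.integral_comp_smul, hφ_int]
    have : (0 : ℝ) < ε ^ n := by positivity
    simp [abs_of_pos this, this.ne', abs_of_pos hε, hε.ne']

theorem mollScaled_bound (n : ℕ) (φ : Euc n → ℝ) (hc : Continuous φ)
    (hφ_int : ∫ x, φ x = 1) (hφ_nonneg : ∀ x, 0 ≤ φ x)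
    (hφ_supp : tsupport φ = closedBall (0 : Euc n) 1) (ε : ℝ) (hε : 0 < ε) (x : Euc n)
    (L : NNReal) (g : Euc n → ℝ) (hg : ∀ᵐ s, |g s| ≤ L * ‖x - s‖) :
    |∫ s, g s * mollScaled n ε φ (x - s)| ≤ L * ε := by
  obtain ⟨hk, h0, hcont, hcs, hi⟩ := mollScaled_facts n φ hc hφ_int hφ_nonneg hφ_supp ε hε x
  have h := norm_integral_le_of_norm_le (μ := volume)
    (f := fun s => g s * mollScaled n ε φ (x - s))
    (((hcont.integrable_of_hasCompactSupport hcs)).const_mul (L * ε : ℝ)) (by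
      filter_upwards [hg] with s hs
      rw [norm_mul, Real.norm_eq_abs, Real.norm_of_nonneg (hk s)]
      rcases lt_or_ge ε ‖x - s‖ with h | h
      · simp [h0 s h]
      · exact mul_le_mul_of_nonneg_right
          (hs.trans (mul_le_mul_of_nonneg_left h L.coe_nonneg)) (hk s))
  rw [integral_const_mul, hi, mul_one] at h
  exact h

theorem stmt2 (n : ℕ) (f : Euc n → ℝ) (L : NNReal)
    -- `f` is globally Lipschitz with constant `L`
    (hf : LipschitzWith L f)
    -- `φ` is a nonnegative mollifier supported in the closed unit ball
    (φ : Euc n → ℝ) (hφ_smooth : ContDiff ℝ (⊤ : ℕ∞) φ)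
    (hφ_int : ∫ x, φ x = 1) (hφ_nonneg : ∀ x, 0 ≤ φ x)
    (hφ_supp : tsupport φ = closedBall (0 : Euc n) 1)
    -- `fdir s h` is the one-sided directional derivative `f°(s)(h)` (exists a.e.)
    (fdir : Euc n → Euc n → ℝ)
    (hfdir : ∀ᵐ s ∂(volume : Measure (Euc n)), ∀ h : Euc n,
      Tendsto (fun t : ℝ => (f (s + t • h) - f s) / t) (𝓝[>] 0) (𝓝 (fdir s h))) :
    -- the bound `|D_ε(x)| ≤ L ε` ...
    (∀ ε : ℝ, 0 < ε → ∀ x : Euc n,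
        |∫ s, fdir s (x - s) * mollScaled n ε φ (x - s)| ≤ (L : ℝ) * ε)
    -- ... and uniform convergence of `F̂_ε = F_ε + D_ε` to `f` on compact sets
    ∧ (∀ K : Set (Euc n), IsCompact K →
        TendstoUniformlyOn (fun (ε : ℝ) (x : Euc n) =>
            (∫ s, f s * mollScaled n ε φ (x - s))
              + ∫ s, fdir s (x - s) * mollScaled n ε φ (x - s))
          f (𝓝[>] 0) K) := by
  have hc : Continuous φ := hφ_smooth.continuous
  have hD : ∀ ε : ℝ, 0 < ε → ∀ x : Euc n,
      |∫ s, fdir s (x - s) * mollScaled n ε φ (x - s)| ≤ (L : ℝ) * ε := by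
    intro ε hε x
    refine mollScaled_bound n φ hc hφ_int hφ_nonneg hφ_supp ε hε x L
      (fun s => fdir s (x - s)) ?_
    filter_upwards [hfdir] with s hs
    refine le_of_tendsto (hs (x - s)).abs ?_
    filter_upwards [self_mem_nhdsWithin] with t ht
    have ht : 0 < t := ht
    rw [abs_div, abs_of_pos ht, div_le_iff₀ ht]
    have := hf.dist_le_mul (s + t • (x - s)) s
    rw [Real.dist_eq, dist_eq_norm, add_sub_cancel_left, norm_smul, Real.norm_of_nonneg ht.le]
      at this
    linarith
  refine ⟨hD, fun K _ => ?_⟩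
  rw [Metric.tendstoUniformlyOn_iff]
  intro δ hδ
  have hlim : Tendsto (fun ε : ℝ => 2 * (L : ℝ) * ε) (𝓝[>] 0) (𝓝 0) := by
    have : Tendsto (fun ε : ℝ => 2 * (L : ℝ) * ε) (𝓝 0) (𝓝 (2 * (L : ℝ) * 0)) :=
      Continuous.tendsto (by fun_prop) 0
    rw [mul_zero] at this
    exact this.mono_left nhdsWithin_le_nhds
  filter_upwards [self_mem_nhdsWithin, hlim.eventually (gt_mem_nhds hδ)] with ε hε hlt x _
  have hε : 0 < ε := hε
  obtain ⟨hk, h0, hcont, hcs, hi⟩ := mollScaled_facts n φ hc hφ_int hφ_nonneg hφ_supp ε hε x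
  have h1 := hD ε hε x
  have h2 := mollScaled_bound n φ hc hφ_int hφ_nonneg hφ_supp ε hε x L
    (fun s => f s - f x) (Eventually.of_forall fun s => by
      have := hf.dist_le_mul s x
      rwa [Real.dist_eq, dist_comm, dist_eq_norm] at this)
  have h3 : ∫ s, (f s - f x) * mollScaled n ε φ (x - s)
      = (∫ s, f s * mollScaled n ε φ (x - s)) - f x := by
    simp_rw [sub_mul]
    rw [integral_sub, integral_const_mul, hi, mul_one]
    · exact (hf.continuous.mul hcont).integrable_of_hasCompactSupport hcs.mul_left
    · exact (hcont.integrable_of_hasCompactSupport hcs).const_mul _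
  simp only [h3] at h2
  rw [dist_comm, Real.dist_eq, abs_lt]
  rw [abs_le] at h1 h2
  constructor <;> linarith [h1.1, h1.2, h2.1, h2.2]
end
end

section
/- Let f : ℝ → ℝ^n be locally integrable and differentiable almost everywhere with derivative Df whose components are locally integrable, let φ be a mollifier on ℝ, and let ε > 0. Then for every m ∈ ℕ the m-th derivative of the directional derivative term D_ε satisfies D_ε^{(m)} = m·(Df * φ_ε^{(m−1)}) + Df * (id·φ_ε^{(m)}), where id(x) = x. -/
open MeasureTheory Filter Topology

noncomputable section

/-- The scaled mollifier `φ_ε(x) = ε⁻¹ φ(x/ε)` on `ℝ`. -/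
def mollR (ε : ℝ) (φ : ℝ → ℝ) : ℝ → ℝ := fun x => ε⁻¹ * φ (x / ε)

theorem aux_deriv_conv {E : Type*} [NormedAddCommGroup E] [NormedSpace ℝ E] [CompleteSpace E]
    (D : ℝ → E) (hD : LocallyIntegrable D volume) (m : ℕ) :
    ∀ (g : ℝ → ℝ), ContDiff ℝ (⊤ : ℕ∞) g → HasCompactSupport g →
    iteratedDeriv m (fun t => ∫ s, g (t - s) • D s)
      = fun t => ∫ s, iteratedDeriv m g (t - s) • D s := by
  induction m with
  | zero => intro g _ _; simp
  | succ k ih =>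
    intro g hg hc
    rw [iteratedDeriv_succ', iteratedDeriv_succ']
    have h1 : deriv (fun t => ∫ s, g (t - s) • D s) = fun t => ∫ s, deriv g (t - s) • D s := by
      funext t
      have h := (hc.hasDerivAt_convolution_right (ContinuousLinearMap.lsmul ℝ ℝ).flip hD
        (hg.of_le (by exact_mod_cast le_top)) t).deriv
      exact h
    rw [h1]
    exact ih (deriv g) (contDiff_infty_iff_deriv.1 hg).2 hc.deriv

theorem aux_leibniz (k : ℕ) : ∀ (g : ℝ → ℝ), ContDiff ℝ (⊤ : ℕ∞) g → ∀ x : ℝ,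
    iteratedDeriv (k + 1) (fun x => x * g x) x
      = ((k + 1 : ℕ) : ℝ) * iteratedDeriv k g x + x * iteratedDeriv (k + 1) g x := by
  intro g hg
  have hd : ∀ j, Differentiable ℝ (iteratedDeriv j g) := fun j =>
    hg.differentiable_iteratedDeriv j (by exact_mod_cast WithTop.coe_lt_top j)
  induction k with
  | zero =>
    intro x
    have := ((hasDerivAt_id x).mul ((hd 0) x).hasDerivAt).deriv
    simp only [iteratedDeriv_zero] at this
    rw [zero_add, iteratedDeriv_one]
    refine this.trans ?_
    simp
  | succ k ih =>
    intro x
    rw [iteratedDeriv_succ, funext ih]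
    have := ((((hd k) x).hasDerivAt.const_mul ((k + 1 : ℕ) : ℝ)).add
      ((hasDerivAt_id x).mul ((hd (k + 1)) x).hasDerivAt)).deriv
    simp only [← iteratedDeriv_succ] at this
    refine this.trans ?_
    simp only [id]
    push_cast
    ring

theorem stmt6 (n : ℕ) (f : ℝ → EuclideanSpace ℝ (Fin n))
    -- `f` is locally integrable
    (hf : LocallyIntegrable f volume)
    -- `f` is differentiable almost everywhere, with locally integrable derivative `Df`
    (Df : ℝ → EuclideanSpace ℝ (Fin n))
    (hDf : ∀ᵐ x ∂(volume : Measure ℝ), HasDerivAt f (Df x) x)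
    (hDf_loc : LocallyIntegrable Df volume)
    -- `φ` is a mollifier on `ℝ`
    (φ : ℝ → ℝ) (hφ_smooth : ContDiff ℝ (⊤ : ℕ∞) φ) (hφ_cpt : HasCompactSupport φ)
    (hφ_int : ∫ x, φ x = 1)
    (ε : ℝ) (hε : 0 < ε)
    -- the directional derivative term `D_ε(t) = ∫ Df(s)·(t-s)·φ_ε(t-s) ds`
    (Dε : ℝ → EuclideanSpace ℝ (Fin n))
    (hDε : ∀ t, Dε t = ∫ s, ((t - s) * mollR ε φ (t - s)) • Df s) :
    -- `D_ε^{(m)} = m·(Df * φ_ε^{(m-1)}) + Df * (id·φ_ε^{(m)})`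
    ∀ m : ℕ, 1 ≤ m → ∀ t,
      iteratedDeriv m Dε t
        = (m : ℝ) • (∫ s, iteratedDeriv (m - 1) (mollR ε φ) (t - s) • Df s)
            + ∫ s, ((t - s) * iteratedDeriv m (mollR ε φ) (t - s)) • Df s := by
  intro m hm t
  obtain ⟨k, rfl⟩ : ∃ k, m = k + 1 := ⟨m - 1, by omega⟩
  have hg : ContDiff ℝ (⊤ : ℕ∞) (mollR ε φ) :=
    contDiff_const.mul (hφ_smooth.comp (contDiff_id.div_const ε))
  have hc : HasCompactSupport (mollR ε φ) := by
    have h := (hφ_cpt.comp_homeomorph (Homeomorph.mulRight₀ ε⁻¹ (inv_ne_zero hε.ne')))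
    exact h.mul_left (f := fun _ => ε⁻¹)
  have hci : ∀ j, HasCompactSupport (iteratedDeriv j (mollR ε φ)) := by
    intro j
    induction j with
    | zero => simpa using hc
    | succ j ih => rw [iteratedDeriv_succ]; exact ih.deriv
  have hco : ∀ j, Continuous (iteratedDeriv j (mollR ε φ)) := fun j =>
    hg.continuous_iteratedDeriv j (by exact_mod_cast le_top)
  have hint : ∀ g : ℝ → ℝ, Continuous g → HasCompactSupport g →
      Integrable (fun s => g (t - s) • Df s) := fun g h1 h2 =>
    (h2.convolutionExists_right (ContinuousLinearMap.lsmul ℝ ℝ).flip hDf_loc h1 t)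
  rw [funext hDε, aux_deriv_conv Df hDf_loc (k + 1) (fun x => x * mollR ε φ x)
    (contDiff_id.mul hg) (hc.mul_left (f := fun x => x))]
  simp only [Nat.add_sub_cancel]
  rw [← integral_smul, ← integral_add]
  · congr 1
    funext s
    rw [aux_leibniz k _ hg, add_smul, mul_smul]
  · exact (hint _ (hco k) (hci k)).smul ((k + 1 : ℕ) : ℝ)
  · exact hint (fun x => x * iteratedDeriv (k + 1) (mollR ε φ) x)
      (continuous_id.mul (hco _)) ((hci _).mul_left (f := fun x => x))
end
end

section
/- Let y₀, y₁, y₂ ∈ ℝ with y₀ > y₁ and y₁ < y₂, let ḡ : ℝ → ℝ be given by ḡ(t) = y₀ + (y₁−y₀)t for t ≤ 1 and ḡ(t) = y₁ + (y₂−y₁)(t−1) for t ≥ 1, and let φ be a nonnegative mollifier on ℝ with supp φ = [−1,1] and φ(0) > 0. Then for every ε > 0 the directional derivative term D_ε of ḡ satisfies D_ε′(1) = 0 and D_ε″(1) = φ_ε(0)·(y₂ + y₀ − 2y₁) > 0; in particular t = 1 is a local minimum of D_ε. -/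
open MeasureTheory Filter Topology

noncomputable section

/-- The extension `ḡ` of the scalar two-segment function through `y₀, y₁, y₂`. -/
def gbar (y0 y1 y2 : ℝ) : ℝ → ℝ :=
  fun t => if t ≤ 1 then y0 + (y1 - y0) * t else y1 + (y2 - y1) * (t - 1)

/-- The (almost everywhere) derivative of `ḡ`. -/
def Dgbar (y0 y1 y2 : ℝ) : ℝ → ℝ :=
  fun t => if t ≤ 1 then y1 - y0 else y2 - y1

/-- The conventional mollification `G_ε = ḡ * φ_ε`. -/
def Gconv (ε : ℝ) (φ : ℝ → ℝ) (y0 y1 y2 : ℝ) : ℝ → ℝ :=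
  fun t => ∫ s, mollR ε φ (t - s) * gbar y0 y1 y2 s

/-- The directional derivative term `D_ε(t) = ∫ Dḡ(s)·(t-s)·φ_ε(t-s) ds`. -/
def Dterm (ε : ℝ) (φ : ℝ → ℝ) (y0 y1 y2 : ℝ) : ℝ → ℝ :=
  fun t => ∫ s, Dgbar y0 y1 y2 s * ((t - s) * mollR ε φ (t - s))

/-- The directional mollification `Ĝ_ε = G_ε + D_ε`. -/
def Ghat (ε : ℝ) (φ : ℝ → ℝ) (y0 y1 y2 : ℝ) : ℝ → ℝ :=
  fun t => Gconv ε φ y0 y1 y2 t + Dterm ε φ y0 y1 y2 t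
theorem stmt8 (y0 y1 y2 : ℝ) (hy0 : y1 < y0) (hy2 : y1 < y2)
    -- `φ` is a nonnegative mollifier on `ℝ` with support `[-1,1]` and `φ(0) > 0`
    (φ : ℝ → ℝ) (hφ_smooth : ContDiff ℝ (⊤ : ℕ∞) φ)
    (hφ_int : ∫ x, φ x = 1) (hφ_nonneg : ∀ x, 0 ≤ φ x)
    (hφ_supp : tsupport φ = Set.Icc (-1 : ℝ) 1) (hφ0 : 0 < φ 0)
    (ε : ℝ) (hε : 0 < ε) :
    -- `D_ε′(1) = 0`, `D_ε″(1) = φ_ε(0)(y₂ + y₀ − 2y₁) > 0`, and `t = 1` is a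
    -- local minimum of `D_ε`
    deriv (Dterm ε φ y0 y1 y2) 1 = 0
    ∧ deriv (deriv (Dterm ε φ y0 y1 y2)) 1 = mollR ε φ 0 * (y2 + y0 - 2 * y1)
    ∧ 0 < mollR ε φ 0 * (y2 + y0 - 2 * y1)
    ∧ IsLocalMin (Dterm ε φ y0 y1 y2) 1 := by
  have hεne : ε ≠ 0 := hε.ne'
  have hφc : HasCompactSupport φ := by
    rw [HasCompactSupport, hφ_supp]; exact isCompact_Icc
  have hmc : ContDiff ℝ (⊤ : ℕ∞) (mollR ε φ) := by
    unfold mollR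
    exact contDiff_const.mul (hφ_smooth.comp (contDiff_id.div_const ε))
  have hms : HasCompactSupport (mollR ε φ) := by
    unfold mollR
    have h1 : HasCompactSupport (fun x : ℝ => φ (x / ε)) := by
      have := hφc.comp_homeomorph (Homeomorph.mulRight₀ ε⁻¹ (inv_ne_zero hεne))
      simpa [Function.comp_def, div_eq_mul_inv] using this
    exact h1.mul_left
  set m := mollR ε φ with hm
  set h : ℝ → ℝ := fun u => u * m u with hh
  have hmcont : Continuous m := hmc.continuous
  have hcont : Continuous h := continuous_id.mul hmcont
  have hsupp : HasCompactSupport h := hms.mul_left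
  have hint : Integrable h := hcont.integrable_of_hasCompactSupport hsupp
  set c := y2 + y0 - 2 * y1 with hc
  have hcpos : 0 < c := by rw [hc]; linarith
  have key : ∀ t, Dterm ε φ y0 y1 y2 t =
      ((y1 - y0) * (∫ u, h u) + c * ∫ u in Set.Iic (0:ℝ), h u)
        + c * ∫ u in (0:ℝ)..(t - 1), h u := by
    intro t
    have e1 : Dterm ε φ y0 y1 y2 t = ∫ u, Dgbar y0 y1 y2 (t - u) * h u := by
      unfold Dterm
      rw [← integral_sub_left_eq_self (fun u => Dgbar y0 y1 y2 (t - u) * h u) volume t]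
      simp [hh, hm]
    have e2 : ∫ u, Dgbar y0 y1 y2 (t - u) * h u
        = ∫ u, ((y1 - y0) * h u + c * (Set.Iio (t - 1)).indicator h u) := by
      congr 1
      ext u
      unfold Dgbar
      by_cases hu : u < t - 1
      · rw [if_neg (by linarith), Set.indicator_of_mem (by exact hu)]
        rw [hc]; ring
      · rw [if_pos (by linarith), Set.indicator_of_notMem (by exact hu)]
        ring
    rw [e1, e2, integral_add (hint.const_mul _)
      ((hint.indicator measurableSet_Iio).const_mul _), integral_const_mul, integral_const_mul,
      integral_indicator measurableSet_Iio, ← integral_Iic_eq_integral_Iio,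
      ← intervalIntegral.integral_Iic_sub_Iic hint.integrableOn hint.integrableOn]
    ring
  have hd : ∀ t, HasDerivAt (Dterm ε φ y0 y1 y2) (c * h (t - 1)) t := by
    intro t
    have hF : HasDerivAt (fun x => ∫ u in (0:ℝ)..x, h u) (h (t - 1)) (t - 1) :=
      hcont.integral_hasStrictDerivAt 0 (t - 1) |>.hasDerivAt
    have h2 := ((hF.comp_sub_const t 1).const_mul c).const_add
      ((y1 - y0) * (∫ u, h u) + c * ∫ u in Set.Iic (0:ℝ), h u)
    rw [funext key]
    exact h2
  have hderiv : deriv (Dterm ε φ y0 y1 y2) = fun t => c * h (t - 1) :=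
    funext fun t => (hd t).deriv
  have hmpos : 0 < m 0 := by
    simp only [hm, mollR, zero_div]; positivity
  have d1 : deriv (Dterm ε φ y0 y1 y2) 1 = 0 := by
    rw [hderiv]; simp [hh]
  have d2 : deriv (deriv (Dterm ε φ y0 y1 y2)) 1 = m 0 * c := by
    rw [hderiv]
    have hm' : HasDerivAt m (deriv m (1 - 1)) (1 - 1) :=
      ((hmc.differentiable (by simp)) (1 - 1)).hasDerivAt
    have h3 := ((((hasDerivAt_id (1 - 1 : ℝ)).mul hm').comp_sub_const 1 1).const_mul c).deriv
    refine Eq.trans h3 ?_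
    simp
    ring
  have pos : 0 < m 0 * c := mul_pos hmpos hcpos
  exact ⟨d1, d2, pos, isLocalMin_of_deriv_deriv_pos (by rw [d2]; exact pos) d1
    (hd 1).continuousAt⟩
end
end

section
/- Let y₀, y₁, y₂ ∈ ℝ with y₀ > y₁ and y₁ < y₂, let ḡ : ℝ → ℝ be given by ḡ(t) = y₀ + (y₁−y₀)t for t ≤ 1 and ḡ(t) = y₁ + (y₂−y₁)(t−1) for t ≥ 1, and let φ be a nonnegative mollifier on ℝ with supp φ = [−1,1] and φ(0) > 0. Then for every ε > 0 there exists δ = δ(ε) > 0 such that, on V := (1−δ, 1+δ), the directional mollification Ĝ_ε of ḡ is convex and satisfies Ĝ_ε ≤ ḡ on V. -/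
open MeasureTheory Filter Topology

noncomputable section

theorem moll_aux (y0 y1 y2 : ℝ) (ε : ℝ) (φ : ℝ → ℝ) (hc : Continuous (mollR ε φ))
    (hs : HasCompactSupport (mollR ε φ)) (hI : ∫ x, mollR ε φ x = 1) (t : ℝ) :
    Ghat ε φ y0 y1 y2 t = y0 + (y1 - y0) * t +
      (y2 - y1 + y0 - y1) * ((t - 1) * ∫ u in Set.Iic (t - 1), mollR ε φ u) := by
  set ψ := mollR ε φ with hψ
  have i1 : Integrable ψ := hc.integrable_of_hasCompactSupport hs
  have i2 : Integrable (fun u => u * ψ u) :=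
    (continuous_id.mul hc).integrable_of_hasCompactSupport hs.mul_left
  have j1 : Integrable (fun s => ψ (t - s)) := i1.comp_sub_left t
  have j2 : Integrable (fun s => (t - s) * ψ (t - s)) := i2.comp_sub_left t
  have k1 := j1.indicator (measurableSet_Ioi (a := (1 : ℝ)))
  have k2 := j2.indicator (measurableSet_Ioi (a := (1 : ℝ)))
  have d : Integrable (fun s => Dgbar y0 y1 y2 s * ((t - s) * ψ (t - s))) := by
    refine ((j2.const_mul (y1 - y0)).add (k2.const_mul (y2 - y1 + y0 - y1))).congr ?_
    refine Eventually.of_forall fun s => ?_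
    by_cases h : s ≤ 1
    · have : s ∉ Set.Ioi (1 : ℝ) := by simpa using h
      simp [Dgbar, h]
    · have : s ∈ Set.Ioi (1 : ℝ) := by simpa using h
      simp only [Pi.add_apply, Dgbar, if_neg h, Set.indicator_of_mem this]
      ring
  have e : Integrable (fun s => (y0 + (y1 - y0) * t) * ψ (t - s) +
      ((y2 - y1 + y0 - y1) * (t - 1)) * (Set.Ioi (1 : ℝ)).indicator (fun s => ψ (t - s)) s) :=
    (j1.const_mul _).add (k1.const_mul _)
  have key : ∀ s, (y0 + (y1 - y0) * t) * ψ (t - s) +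
      ((y2 - y1 + y0 - y1) * (t - 1)) * (Set.Ioi (1 : ℝ)).indicator (fun s => ψ (t - s)) s
      = ψ (t - s) * gbar y0 y1 y2 s + Dgbar y0 y1 y2 s * ((t - s) * ψ (t - s)) := by
    intro s
    by_cases h : s ≤ 1
    · have : s ∉ Set.Ioi (1 : ℝ) := by simpa using h
      simp only [Dgbar, gbar, if_pos h, Set.indicator_of_notMem this]
      ring
    · have : s ∈ Set.Ioi (1 : ℝ) := by simpa using h
      simp only [Dgbar, gbar, if_neg h, Set.indicator_of_mem this]
      ring
  have g : Integrable (fun s => ψ (t - s) * gbar y0 y1 y2 s) := by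
    refine (e.sub d).congr (Eventually.of_forall fun s => ?_)
    simp only [Pi.sub_apply]
    rw [key s]
    ring
  have h1 : Ghat ε φ y0 y1 y2 t =
      ∫ s, (ψ (t - s) * gbar y0 y1 y2 s + Dgbar y0 y1 y2 s * ((t - s) * ψ (t - s))) := by
    rw [integral_add g d]
    rfl
  have h2 : ∫ s, (Set.Ioi (1 : ℝ)).indicator (fun s => ψ (t - s)) s
      = ∫ u in Set.Iic (t - 1), ψ u := by
    rw [integral_Iic_eq_integral_Iio, ← integral_indicator measurableSet_Iio,
      ← integral_sub_left_eq_self _ volume t]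
    congr 1
    ext s
    simp only [Set.indicator, Set.mem_Ioi, Set.mem_Iio]
    congr 1
    · exact propext lt_sub_comm
    · simp
  rw [h1, ← integral_congr_ae (Eventually.of_forall key),
    integral_add (j1.const_mul _) (k1.const_mul _), integral_const_mul, integral_const_mul, h2,
    integral_sub_left_eq_self ψ volume t, hI]
  ring

theorem stmt9 (y0 y1 y2 : ℝ) (hy0 : y1 < y0) (hy2 : y1 < y2)
    -- `φ` is a nonnegative mollifier on `ℝ` with support `[-1,1]` and `φ(0) > 0`
    (φ : ℝ → ℝ) (hφ_smooth : ContDiff ℝ (⊤ : ℕ∞) φ)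
    (hφ_int : ∫ x, φ x = 1) (hφ_nonneg : ∀ x, 0 ≤ φ x)
    (hφ_supp : tsupport φ = Set.Icc (-1 : ℝ) 1) (hφ0 : 0 < φ 0)
    (ε : ℝ) (hε : 0 < ε) :
    -- there is `δ > 0` such that on `V = (1-δ, 1+δ)` the directional
    -- mollification `Ĝ_ε` is convex and lies below `ḡ`
    ∃ δ : ℝ, 0 < δ ∧
      ConvexOn ℝ (Set.Ioo (1 - δ) (1 + δ)) (Ghat ε φ y0 y1 y2)
      ∧ ∀ t ∈ Set.Ioo (1 - δ) (1 + δ), Ghat ε φ y0 y1 y2 t ≤ gbar y0 y1 y2 t := by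
  have hψd : ContDiff ℝ (⊤ : ℕ∞) (mollR ε φ) := by
    unfold mollR
    fun_prop
  have hc : Continuous (mollR ε φ) := hψd.continuous
  have hs : HasCompactSupport (mollR ε φ) := by
    have h0 : HasCompactSupport φ := by
      rw [HasCompactSupport, hφ_supp]
      exact isCompact_Icc
    have h1 : HasCompactSupport (fun x => φ (ε⁻¹ • x)) := h0.comp_smul (inv_ne_zero hε.ne')
    have h2 : mollR ε φ = fun x => ε⁻¹ * φ (ε⁻¹ • x) := by
      ext x
      simp [mollR, div_eq_inv_mul]
    rw [h2]
    exact h1.mul_left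
  have hI : ∫ x, mollR ε φ x = 1 := by
    unfold mollR
    rw [integral_const_mul, Measure.integral_comp_div, hφ_int, abs_of_pos hε]
    simp [hε.ne']
  have hnn : ∀ x, 0 ≤ mollR ε φ x := fun x => mul_nonneg (inv_nonneg.2 hε.le) (hφ_nonneg _)
  have h0 : 0 < mollR ε φ 0 := by
    simp only [mollR, zero_div]
    positivity
  have hG := moll_aux y0 y1 y2 ε φ hc hs hI
  set ψ := mollR ε φ with hψ
  have i1 : Integrable ψ := hc.integrable_of_hasCompactSupport hs
  set Φ : ℝ → ℝ := fun t => ∫ u in Set.Iic (t - 1), ψ u with hΦ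
  have Φ0 : ∀ t, 0 ≤ Φ t := fun t => integral_nonneg hnn
  have Φ1 : ∀ t, Φ t ≤ 1 := fun t => by
    rw [← hI]
    exact setIntegral_le_integral i1 (Eventually.of_forall hnn)
  have Φd : ∀ t, HasDerivAt Φ (ψ (t - 1)) t := by
    intro t
    have e : Φ = fun t => (∫ u in Set.Iic (0 : ℝ), ψ u) + ∫ u in (0 : ℝ)..(t - 1), ψ u := by
      ext t
      rw [← intervalIntegral.integral_Iic_sub_Iic i1.integrableOn i1.integrableOn]
      simp [hΦ]
    rw [e]
    have h := intervalIntegral.integral_hasDerivAt_right (hc.intervalIntegrable 0 (t - 1))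
      hc.stronglyMeasurable.stronglyMeasurableAtFilter hc.continuousAt
    exact (h.comp_sub_const t 1).const_add _
  set m := y2 - y1 + y0 - y1 with hm
  have mpos : 0 < m := by linarith
  have hG' : Ghat ε φ y0 y1 y2 = fun t => y0 + (y1 - y0) * t + m * ((t - 1) * Φ t) := by
    ext t
    exact hG t
  have D1 : ∀ t, HasDerivAt (fun t => y0 + (y1 - y0) * t + m * ((t - 1) * Φ t))
      ((y1 - y0) + m * (Φ t + (t - 1) * ψ (t - 1))) t := by
    intro t
    have a1 := (((hasDerivAt_id t).const_mul (y1 - y0)).const_add y0).add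
      (((((hasDerivAt_id t).sub_const 1).mul (Φd t))).const_mul m)
    refine HasDerivAt.congr_deriv a1 ?_
    simp only [id]
    ring
  have ψd : ∀ x, HasDerivAt ψ (deriv ψ x) x := fun x =>
    ((hψd.differentiable (by simp)) x).hasDerivAt
  have D2 : ∀ t, HasDerivAt (fun t => (y1 - y0) + m * (Φ t + (t - 1) * ψ (t - 1)))
      (m * (2 * ψ (t - 1) + (t - 1) * deriv ψ (t - 1))) t := by
    intro t
    have b := (ψd (t - 1)).comp_sub_const t 1
    have a1 := (((Φd t).add (((hasDerivAt_id t).sub_const 1).mul b)).const_mul m).const_add (y1 - y0)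
    refine HasDerivAt.congr_deriv a1 ?_
    simp only [id]
    ring
  have dc : Continuous (deriv ψ) := hψd.continuous_deriv (by simp)
  have qc : Continuous (fun t : ℝ => 2 * ψ (t - 1) + (t - 1) * deriv ψ (t - 1)) := by fun_prop
  have q0 : ∀ᶠ t in 𝓝 (1 : ℝ), 0 < 2 * ψ (t - 1) + (t - 1) * deriv ψ (t - 1) := by
    refine qc.continuousAt.eventually (lt_mem_nhds ?_)
    simpa using h0
  obtain ⟨δ, hδ, hball⟩ := Metric.eventually_nhds_iff_ball.1 q0
  rw [Real.ball_eq_Ioo] at hball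
  refine ⟨δ, hδ, ?_, ?_⟩
  · rw [hG']
    have e1 : deriv (fun t => y0 + (y1 - y0) * t + m * ((t - 1) * Φ t)) =
      fun t => (y1 - y0) + m * (Φ t + (t - 1) * ψ (t - 1)) := funext fun t => (D1 t).deriv
    refine convexOn_of_deriv2_nonneg' (convex_Ioo _ _)
      (fun t _ => (D1 t).differentiableAt.differentiableWithinAt) ?_ ?_
    · rw [e1]
      exact fun t _ => (D2 t).differentiableAt.differentiableWithinAt
    · intro t ht
      rw [Function.iterate_succ, Function.iterate_one, Function.comp_apply, e1, (D2 t).deriv]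
      exact mul_nonneg mpos.le (hball t ht).le
  · intro t _
    rw [hG']
    simp only [gbar]
    split_ifs with h
    · have : m * ((t - 1) * Φ t) ≤ 0 :=
        mul_nonpos_of_nonneg_of_nonpos mpos.le
          (mul_nonpos_of_nonpos_of_nonneg (by linarith) (Φ0 t))
      linarith
    · have h3 : m * ((t - 1) * Φ t) ≤ m * ((t - 1) * 1) := by
        have := Φ1 t
        have h4 : 0 ≤ t - 1 := by linarith
        gcongr
      have h5 : m * ((t - 1) * 1) = y1 + (y2 - y1) * (t - 1) - (y0 + (y1 - y0) * t) := by
        rw [hm]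
        ring
      linarith
end
end

section
/- Let f̄ : ℝ → ℝ^n be the extension of the (p+1)-points-p-segments curve through P₀, …, P_p ∈ ℝ^n (p ≥ 2), and let φ be an even nonnegative mollifier on ℝ with supp φ = [−1,1]. Then for every ε ∈ (0,1) and every k ∈ {1, …, p−1}, the directional mollification F̂_ε of f̄ satisfies F̂_ε(k) = f(k) = P_k; that is, all interior waypoints are preserved exactly. -/
open MeasureTheory Filter Topology

noncomputable section

/-- The index `r ∈ {1,…,p}` of the segment containing `t` (clamped, so that the
first and last segments are extended affinely). -/
def segIdx (p : ℕ) (t : ℝ) : ℤ := max 1 (min (p : ℤ) ⌈t⌉)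

/-- The extension `f̄` of the `(p+1)`-points-`p`-segments curve through
`P 0, …, P p`: on `[r-1, r]` it is `P_{r-1} + (t-(r-1)) • (P_r - P_{r-1})`,
extended by the affine formula of the first segment for `t ≤ 0` and of the last
segment for `t ≥ p`. -/
def fbarP {n : ℕ} (p : ℕ) (P : ℕ → Euc n) : ℝ → Euc n :=
  fun t => P (segIdx p t - 1).toNat
    + (t - ((segIdx p t : ℝ) - 1)) • (P (segIdx p t).toNat - P (segIdx p t - 1).toNat)

/-- The (almost everywhere) derivative of `f̄`. -/
def DfbarP {n : ℕ} (p : ℕ) (P : ℕ → Euc n) : ℝ → Euc n :=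
  fun t => P (segIdx p t).toNat - P (segIdx p t - 1).toNat

/-- The conventional mollification `F_ε = f̄ * φ_ε` (componentwise). -/
def FconvP {n : ℕ} (ε : ℝ) (φ : ℝ → ℝ) (p : ℕ) (P : ℕ → Euc n) : ℝ → Euc n :=
  fun t => ∫ s, mollR ε φ (t - s) • fbarP p P s

/-- The directional derivative term `D_ε(t) = ∫ Df̄(s)·(t-s)·φ_ε(t-s) ds`. -/
def DdirP {n : ℕ} (ε : ℝ) (φ : ℝ → ℝ) (p : ℕ) (P : ℕ → Euc n) : ℝ → Euc n :=
  fun t => ∫ s, ((t - s) * mollR ε φ (t - s)) • DfbarP p P s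

/-- The directional mollification `F̂_ε = F_ε + D_ε`. -/
def FhatP {n : ℕ} (ε : ℝ) (φ : ℝ → ℝ) (p : ℕ) (P : ℕ → Euc n) : ℝ → Euc n :=
  fun t => FconvP ε φ p P t + DdirP ε φ p P t

theorem segIdx_left (p k : ℕ) (h1 : 1 ≤ k) (h2 : k ≤ p - 1) (s : ℝ) (ha : (k:ℝ) - 1 < s)
    (hb : s ≤ k) : segIdx p s = k := by
  have : ⌈s⌉ = (k:ℤ) := by rw [Int.ceil_eq_iff]; push_cast; exact ⟨ha, hb⟩
  unfold segIdx; rw [this]; omega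

theorem segIdx_right (p k : ℕ) (h1 : 1 ≤ k) (h2 : k ≤ p - 1) (s : ℝ) (ha : (k:ℝ) < s)
    (hb : s ≤ k + 1) : segIdx p s = k + 1 := by
  have : ⌈s⌉ = (k:ℤ) + 1 := by rw [Int.ceil_eq_iff]; push_cast; exact ⟨by linarith, hb⟩
  unfold segIdx; rw [this]; omega

theorem fbar_eq {n : ℕ} (p k : ℕ) (P : ℕ → Euc n) (h1 : 1 ≤ k) (h2 : k ≤ p - 1) (s : ℝ)
    (ha : (k:ℝ) - 1 < s) (hb : s ≤ k + 1) :
    fbarP p P s = P k - ((k:ℝ) - s) • DfbarP p P s := by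
  unfold fbarP DfbarP
  rcases le_or_gt s k with h | h
  · rw [segIdx_left p k h1 h2 s ha h]
    have e : ((k:ℤ)).toNat = k := by omega
    rw [e]
    push_cast
    module
  · rw [segIdx_right p k h1 h2 s h hb]
    have e : ((k:ℤ) + 1 - 1).toNat = k := by omega
    rw [e]
    push_cast
    module

theorem Dfbar_eq {n : ℕ} (p k : ℕ) (P : ℕ → Euc n) (h1 : 1 ≤ k) (h2 : k ≤ p - 1) (s : ℝ)
    (ha : (k:ℝ) - 1 < s) (hb : s ≤ k + 1) :
    DfbarP p P s = if s ≤ k then P k - P (k-1) else P (k+1) - P k := by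
  unfold DfbarP
  split_ifs with h
  · rw [segIdx_left p k h1 h2 s ha h]
    congr 2 <;> omega
  · rw [segIdx_right p k h1 h2 s (not_le.1 h) hb]
    congr 2 <;> omega

theorem stmt13 (n : ℕ) (p : ℕ) (hp : 2 ≤ p) (P : ℕ → Euc n)
    -- `φ` is an even nonnegative mollifier on `ℝ` with support `[-1,1]`
    (φ : ℝ → ℝ) (hφ_smooth : ContDiff ℝ (⊤ : ℕ∞) φ)
    (hφ_int : ∫ x, φ x = 1) (hφ_nonneg : ∀ x, 0 ≤ φ x)
    (hφ_even : ∀ x, φ (-x) = φ x)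
    (hφ_supp : tsupport φ = Set.Icc (-1 : ℝ) 1) :
    -- all interior waypoints are preserved: `F̂_ε(k) = f(k) = P k`
    ∀ ε : ℝ, ε ∈ Set.Ioo (0 : ℝ) 1 → ∀ k : ℕ, 1 ≤ k → k ≤ p - 1 →
      FhatP ε φ p P (k : ℝ) = P k ∧ fbarP p P (k : ℝ) = P k := by
  intro ε hε k h1 h2
  obtain ⟨he0, he1⟩ := hε
  have hz : ∀ s : ℝ, ¬ ((k:ℝ) - 1 < s ∧ s ≤ k + 1) → mollR ε φ (k - s) = 0 := by
    intro s hs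
    unfold mollR
    rw [image_eq_zero_of_notMem_tsupport (f := φ), mul_zero]
    rw [hφ_supp, Set.mem_Icc, le_div_iff₀ he0, div_le_iff₀ he0]
    rintro ⟨ha, hb⟩
    exact hs ⟨by linarith, by linarith⟩
  have hcs : HasCompactSupport φ := by
    unfold HasCompactSupport; rw [hφ_supp]; exact isCompact_Icc
  have hφc : Continuous φ := hφ_smooth.continuous
  have hmc : Continuous (fun s : ℝ => mollR ε φ (k - s)) := by
    unfold mollR; fun_prop
  have hms : HasCompactSupport (fun s : ℝ => mollR ε φ (k - s)) := by
    apply HasCompactSupport.intro (isCompact_Icc (a := (k:ℝ) - 1) (b := k + 1))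
    intro s hs
    exact hz s fun h => hs ⟨h.1.le, h.2⟩
  have hmi : Integrable (fun s : ℝ => mollR ε φ (k - s)) := hmc.integrable_of_hasCompactSupport hms
  have hgi : Integrable (fun s : ℝ => ((k:ℝ) - s) * mollR ε φ (k - s)) :=
    Continuous.integrable_of_hasCompactSupport (by fun_prop) hms.mul_left
  have hD : Integrable (fun s : ℝ => (((k:ℝ) - s) * mollR ε φ (k - s)) • DfbarP p P s) := by
    have := Integrable.piecewise (measurableSet_Iic (a := (k:ℝ)))
      (hgi.smul_const (P k - P (k-1))).integrableOn (hgi.smul_const (P (k+1) - P k)).integrableOn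
    refine this.congr (Eventually.of_forall fun s => ?_)
    by_cases hs : (k:ℝ) - 1 < s ∧ s ≤ k + 1
    · simp only [Set.piecewise, Set.mem_Iic, Dfbar_eq p k P h1 h2 s hs.1 hs.2]
      split_ifs <;> rfl
    · simp [Set.piecewise, hz s hs]
  have hF : (fun s : ℝ => mollR ε φ (k - s) • fbarP p P s)
      = fun s => mollR ε φ (k - s) • P k - (((k:ℝ) - s) * mollR ε φ (k - s)) • DfbarP p P s := by
    funext s
    by_cases hs : (k:ℝ) - 1 < s ∧ s ≤ k + 1
    · rw [fbar_eq p k P h1 h2 s hs.1 hs.2]; module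
    · simp [hz s hs]
  have hone : ∫ s, mollR ε φ ((k:ℝ) - s) = 1 := by
    rw [integral_sub_left_eq_self (fun x => mollR ε φ x)]
    unfold mollR
    rw [integral_const_mul, Measure.integral_comp_div, hφ_int, abs_of_pos he0]
    simp [he0.ne']
  constructor
  · unfold FhatP FconvP DdirP
    rw [hF, integral_sub (hmi.smul_const _) hD, integral_smul_const, hone]
    simp
  · rw [fbar_eq p k P h1 h2 k (by linarith) (by linarith)]
    simp
end
end

section
/- Let f̄ : ℝ → ℝ^n be the extension of the (p+1)-points-p-segments curve through P₀, …, P_p ∈ ℝ^n (p ≥ 2), and let φ be an even nonnegative mollifier on ℝ with supp φ = [−1,1]. Then for every ε ∈ (0,1): L(F_ε|_{[0,p]}) ≤ L(f) ≤ L(F̂_ε|_{[0,p]}), where F_ε and F̂_ε are the conventional and directional mollifications of f̄, f is the (p+1)-points-p-segments curve, and L denotes curve length with respect to the Euclidean (ℓ₂) norm. -/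
open MeasureTheory Filter Topology

noncomputable section

/-- Coefficient of the `i`-th edge vector in `fbarP`. -/
def cP (p i : ℕ) (t : ℝ) : ℝ :=
  if i = 0 then min t 1 else if i + 1 = p then max (t - i) 0 else max 0 (min 1 (t - i))

lemma cP_mono (p i : ℕ) : Monotone (cP p i) := by
  intro a b h
  unfold cP
  split_ifs
  · gcongr
  · gcongr
  · gcongr

lemma cP_cont (p i : ℕ) : Continuous (cP p i) := by
  unfold cP
  split_ifs <;> fun_prop

lemma cP_shift (p i : ℕ) (hp : 2 ≤ p) (hi : i < p) (u : ℝ) (hu : |u| < 1) :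
    cP p i (p - u) - cP p i (0 - u)
      = 1 + u * ((if i = 0 then 1 else 0) - (if i + 1 = p then 1 else 0)) := by
  have hu' := abs_lt.1 hu
  have hp' : (2 : ℝ) ≤ p := by exact_mod_cast hp
  unfold cP
  split_ifs with h0 h1 h1
  · omega
  · rw [min_eq_right (by linarith), min_eq_left (by linarith)]; ring
  · have : (i : ℝ) + 1 = p := by exact_mod_cast h1
    rw [max_eq_left (by linarith), max_eq_right (by linarith)]; linarith
  · have : (i : ℝ) + 2 ≤ p := by exact_mod_cast (by omega : i + 2 ≤ p)
    have : (1 : ℝ) ≤ i := by exact_mod_cast (by omega : 1 ≤ i)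
    rw [min_eq_left (by linarith), min_eq_right (by linarith), max_eq_right (by linarith),
      max_eq_left (by linarith)]; ring

/-- description of segIdx -/
lemma segIdx_spec (p : ℕ) (hp : 2 ≤ p) (t : ℝ) :
    ∃ j : ℕ, j < p ∧ segIdx p t = (j : ℤ) + 1 ∧ (j ≠ 0 → (j : ℝ) < t) ∧
      (j + 1 ≠ p → t ≤ j + 1) := by
  refine ⟨(segIdx p t - 1).toNat, ?_, ?_, ?_, ?_⟩
  · unfold segIdx; omega
  · unfold segIdx; omega
  · intro h
    have : (((segIdx p t - 1).toNat : ℕ) : ℤ) < ⌈t⌉ := by unfold segIdx at *; omega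
    exact_mod_cast Int.lt_ceil.1 this
  · intro h
    have : ⌈t⌉ ≤ (((segIdx p t - 1).toNat : ℕ) : ℤ) + 1 := by unfold segIdx at *; omega
    exact_mod_cast Int.ceil_le.1 this

lemma cP_lt (p i j : ℕ) (hj : j < p) (t : ℝ) (h1 : j ≠ 0 → (j : ℝ) < t) (hij : i < j) :
    cP p i t = 1 := by
  have h2 := h1 (by omega)
  have h3 : (i : ℝ) + 1 ≤ j := by exact_mod_cast hij
  have h4 : (0 : ℝ) ≤ i := by positivity
  unfold cP
  split_ifs
  · rw [min_eq_right (by linarith)]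
  · omega
  · rw [min_eq_left (by linarith), max_eq_right (by linarith)]

lemma cP_gt (p i j : ℕ) (hi : i < p) (t : ℝ) (h1 : j + 1 ≠ p → t ≤ j + 1) (hij : j < i) :
    cP p i t = 0 := by
  have h2 := h1 (by omega)
  have h3 : (j : ℝ) + 1 ≤ i := by exact_mod_cast hij
  unfold cP
  split_ifs
  · omega
  · rw [max_eq_right (by linarith)]
  · rw [min_eq_right (by linarith), max_eq_left (by linarith)]

lemma cP_eq (p j : ℕ) (hp : 2 ≤ p) (t : ℝ) (h0 : j ≠ 0 → (j : ℝ) < t)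
    (h1 : j + 1 ≠ p → t ≤ j + 1) :
    cP p j t = t - j := by
  unfold cP
  split_ifs with h h'
  · subst h
    have := h1 (by omega)
    rw [min_eq_left (by simpa using this)]; simp
  · have := h0 h
    rw [max_eq_left (by linarith)]
  · have := h0 h
    have := h1 h'
    rw [min_eq_right (by linarith), max_eq_right (by linarith)]

lemma fbarP_eq {n : ℕ} (p : ℕ) (hp : 2 ≤ p) (P : ℕ → Euc n) (t : ℝ) :
    fbarP p P t = P 0 + ∑ i ∈ Finset.range p, cP p i t • (P (i + 1) - P i) := by
  obtain ⟨j, hj, hs, h0, h1⟩ := segIdx_spec p hp t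
  have e1 : ((j : ℤ) + 1 - 1).toNat = j := by omega
  have e2 : ((j : ℤ) + 1).toNat = j + 1 := by omega
  have key : ∑ i ∈ Finset.range p, cP p i t • (P (i + 1) - P i)
      = ∑ i ∈ Finset.range (j + 1), cP p i t • (P (i + 1) - P i) := by
    symm
    apply Finset.sum_subset
    · intro i hi
      simp only [Finset.mem_range] at *
      omega
    · intro i hi hi'
      simp only [Finset.mem_range] at *
      rw [cP_gt p i j hi t h1 (by omega), zero_smul]
  have key2 : ∑ i ∈ Finset.range j, cP p i t • (P (i + 1) - P i) = P j - P 0 := by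
    rw [← Finset.sum_range_sub]
    apply Finset.sum_congr rfl
    intro i hi
    rw [cP_lt p i j hj t h0 (Finset.mem_range.1 hi), one_smul]
  rw [key, Finset.sum_range_succ, key2, cP_eq p j hp t h0 h1]
  unfold fbarP
  rw [hs, e1, e2]
  push_cast
  rw [add_sub_cancel_right]
  abel

lemma fbarP_cont {n : ℕ} (p : ℕ) (hp : 2 ≤ p) (P : ℕ → Euc n) : Continuous (fbarP p P) := by
  have : fbarP p P = fun t => P 0 + ∑ i ∈ Finset.range p, cP p i t • (P (i + 1) - P i) :=
    funext (fbarP_eq p hp P)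
  rw [this]
  have := cP_cont p
  fun_prop

/-- arclength function -/
def ellP {n : ℕ} (p : ℕ) (P : ℕ → Euc n) (t : ℝ) : ℝ :=
  ∑ i ∈ Finset.range p, cP p i t * ‖P (i + 1) - P i‖

lemma ellP_cont {n : ℕ} (p : ℕ) (P : ℕ → Euc n) : Continuous (ellP p P) := by
  unfold ellP
  have := cP_cont p
  fun_prop

lemma fbarP_le {n : ℕ} (p : ℕ) (hp : 2 ≤ p) (P : ℕ → Euc n) (a b : ℝ) (hab : a ≤ b) :
    ‖fbarP p P b - fbarP p P a‖ ≤ ellP p P b - ellP p P a := by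
  rw [fbarP_eq p hp, fbarP_eq p hp, add_sub_add_left_eq_sub, ← Finset.sum_sub_distrib]
  unfold ellP
  rw [← Finset.sum_sub_distrib]
  refine (norm_sum_le _ _).trans (Finset.sum_le_sum fun i _ => ?_)
  rw [← sub_smul, ← sub_mul, norm_smul, Real.norm_of_nonneg (sub_nonneg.2 (cP_mono p i hab))]

lemma fbarP_node {n : ℕ} (p : ℕ) (hp : 2 ≤ p) (P : ℕ → Euc n) (r : ℕ) (hr : r ≤ p) (s : ℝ)
    (h : |(r : ℝ) - s| < 1) :
    fbarP p P s + ((r : ℝ) - s) • DfbarP p P s = P r := by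
  obtain ⟨j, hj, hs, h0, h1⟩ := segIdx_spec p hp s
  have e1 : ((j : ℤ) + 1 - 1).toNat = j := by omega
  have e2 : ((j : ℤ) + 1).toNat = j + 1 := by omega
  have h' := abs_lt.1 h
  have hjr : j = r ∨ j + 1 = r := by
    by_contra! hc
    rcases lt_or_gt_of_ne hc.1 with hlt | hlt
    · have : (j : ℝ) + 2 ≤ r := by exact_mod_cast (by omega : j + 2 ≤ r)
      have := h1 (by omega)
      linarith
    · have : (r : ℝ) + 1 ≤ j := by exact_mod_cast hlt
      have := h0 (by omega)
      linarith
  unfold fbarP DfbarP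
  rw [hs, e1, e2, add_assoc, ← add_smul]
  rcases hjr with rfl | rfl
  · have : (s - ((((j : ℤ) + 1 : ℤ) : ℝ) - 1) + ((j : ℝ) - s)) = 0 := by push_cast; ring
    rw [this]; simp
  · have : (s - ((((j : ℤ) + 1 : ℤ) : ℝ) - 1) + (((j + 1 : ℕ) : ℝ) - s)) = 1 := by push_cast; ring
    rw [this]; simp

lemma segIdx_meas (p : ℕ) : Measurable (segIdx p) := by
  unfold segIdx
  exact measurable_const.max (measurable_const.min Int.measurable_ceil)

lemma DfbarP_meas {n : ℕ} (p : ℕ) (P : ℕ → Euc n) : Measurable (DfbarP p P) := by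
  have : Measurable (fun k : ℤ => P k.toNat - P (k - 1).toNat) := measurable_from_top
  exact this.comp (segIdx_meas p)

lemma DfbarP_bdd {n : ℕ} (p : ℕ) (hp : 2 ≤ p) (P : ℕ → Euc n) (t : ℝ) :
    ‖DfbarP p P t‖ ≤ ∑ i ∈ Finset.range p, ‖P (i + 1) - P i‖ := by
  obtain ⟨j, hj, hs, h0, h1⟩ := segIdx_spec p hp t
  have e1 : ((j : ℤ) + 1 - 1).toNat = j := by omega
  have e2 : ((j : ℤ) + 1).toNat = j + 1 := by omega
  unfold DfbarP
  rw [hs, e1, e2]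
  exact Finset.single_le_sum (f := fun i => ‖P (i + 1) - P i‖) (fun i _ => norm_nonneg _)
    (Finset.mem_range.2 hj)

lemma eVar_le_of {n : ℕ} (F : ℝ → Euc n) (M : ℝ → ℝ) (c : ℝ)
    (h : ∀ a b, a ≤ b → ‖F b - F a‖ ≤ M b - M a) :
    eVariationOn F (Set.Icc 0 c) ≤ ENNReal.ofReal (M c - M 0) := by
  have hM : Monotone M := fun a b hab => sub_nonneg.1 ((norm_nonneg _).trans (h a b hab))
  refine iSup_le ?_
  rintro ⟨N, u, hu, us⟩
  calc ∑ i ∈ Finset.range N, edist (F (u (i + 1))) (F (u i))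
      ≤ ∑ i ∈ Finset.range N, ENNReal.ofReal (M (u (i + 1)) - M (u i)) := by
        refine Finset.sum_le_sum fun i _ => ?_
        rw [edist_dist, dist_eq_norm]
        exact ENNReal.ofReal_le_ofReal (h _ _ (hu (Nat.le_succ i)))
    _ = ENNReal.ofReal (M (u N) - M (u 0)) := by
        rw [← ENNReal.ofReal_sum_of_nonneg, Finset.sum_range_sub (fun i => M (u i))]
        intro i _
        exact sub_nonneg.2 (hM (hu (Nat.le_succ i)))
    _ ≤ _ := ENNReal.ofReal_le_ofReal (sub_le_sub (hM (us N).2) (hM (us 0).1))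

lemma le_eVar_of {n : ℕ} (p : ℕ) (P : ℕ → Euc n) (F : ℝ → Euc n)
    (h : ∀ r : ℕ, r ≤ p → F r = P r) :
    ENNReal.ofReal (∑ i ∈ Finset.range p, ‖P (i + 1) - P i‖)
      ≤ eVariationOn F (Set.Icc 0 (p : ℝ)) := by
  have := eVariationOn.sum_le_of_monotoneOn_Iic (f := F) (s := Set.Icc 0 (p : ℝ)) (n := p)
    (u := fun i : ℕ => (i : ℝ)) (fun a _ b _ hab => Nat.cast_le.2 hab)
    (fun i hi => ⟨by positivity, by exact_mod_cast hi⟩)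
  refine le_trans (le_of_eq ?_) this
  rw [ENNReal.ofReal_sum_of_nonneg (fun _ _ => norm_nonneg _)]
  refine Finset.sum_congr rfl fun i hi => ?_
  have hi := Finset.mem_range.1 hi
  rw [h (i + 1) hi, h i hi.le, edist_dist, dist_eq_norm]

lemma ellP_shift {n : ℕ} (p : ℕ) (hp : 2 ≤ p) (P : ℕ → Euc n) :
    ∃ K : ℝ, ∀ u : ℝ, |u| < 1 → ellP p P (p - u) - ellP p P (0 - u)
      = (∑ i ∈ Finset.range p, ‖P (i + 1) - P i‖) + u * K := by
  refine ⟨∑ i ∈ Finset.range p, ((if i = 0 then 1 else 0) - (if i + 1 = p then 1 else 0))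
    * ‖P (i + 1) - P i‖, fun u hu => ?_⟩
  unfold ellP
  rw [← Finset.sum_sub_distrib, Finset.mul_sum, ← Finset.sum_add_distrib]
  refine Finset.sum_congr rfl fun i hi => ?_
  rw [← sub_mul, cP_shift p i hp (Finset.mem_range.1 hi) u hu]
  ring

lemma int_smul_cont {E : Type*} [NormedAddCommGroup E] [NormedSpace ℝ E]
    (m : ℝ → ℝ) (hm : Continuous m) (hc : HasCompactSupport m) (g : ℝ → E) (hg : Continuous g) :
    Integrable (fun u => m u • g u) :=
  (hm.smul hg).integrable_of_hasCompactSupport hc.smul_right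

theorem stmt15 (n : ℕ) (p : ℕ) (hp : 2 ≤ p) (P : ℕ → Euc n)
    -- `φ` is an even nonnegative mollifier on `ℝ` with support `[-1,1]`
    (φ : ℝ → ℝ) (hφ_smooth : ContDiff ℝ (⊤ : ℕ∞) φ)
    (hφ_int : ∫ x, φ x = 1) (hφ_nonneg : ∀ x, 0 ≤ φ x)
    (hφ_even : ∀ x, φ (-x) = φ x)
    (hφ_supp : tsupport φ = Set.Icc (-1 : ℝ) 1)
    (ε : ℝ) (hε : ε ∈ Set.Ioo (0 : ℝ) 1) :
    -- `L(F_ε|[0,p]) ≤ L(f) ≤ L(F̂_ε|[0,p])` in the Euclidean norm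
    eVariationOn (FconvP ε φ p P) (Set.Icc 0 (p : ℝ))
        ≤ eVariationOn (fbarP p P) (Set.Icc 0 (p : ℝ))
    ∧ eVariationOn (fbarP p P) (Set.Icc 0 (p : ℝ))
        ≤ eVariationOn (FhatP ε φ p P) (Set.Icc 0 (p : ℝ)) := by
  obtain ⟨he0, he1⟩ := hε
  obtain ⟨m, hm⟩ : ∃ m, m = mollR ε φ := ⟨_, rfl⟩
  have hcont : Continuous m := by
    rw [hm]; unfold mollR
    have := hφ_smooth.continuous
    fun_prop
  have hnn : ∀ x, 0 ≤ m x := fun x => by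
    rw [hm]; exact mul_nonneg (inv_nonneg.2 he0.le) (hφ_nonneg _)
  have heven : ∀ x, m (-x) = m x := fun x => by
    rw [hm]; unfold mollR; rw [neg_div, hφ_even]
  have hint : ∫ x, m x = 1 := by
    rw [hm]; unfold mollR
    rw [integral_const_mul, Measure.integral_comp_div, hφ_int, abs_of_pos he0]
    simp [he0.ne']
  have hz : ∀ x, 1 ≤ |x| → m x = 0 := fun x hx => by
    rw [hm]; unfold mollR
    rw [image_eq_zero_of_notMem_tsupport (f := φ), mul_zero]
    rw [hφ_supp]
    intro h
    have h1 : |x / ε| ≤ 1 := abs_le.2 h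
    rw [abs_div, abs_of_pos he0, div_le_one he0] at h1
    linarith
  have hcs : HasCompactSupport m := by
    refine HasCompactSupport.intro (isCompact_Icc (a := (-1 : ℝ)) (b := 1)) fun x hx => hz x ?_
    by_contra! h
    exact hx (abs_le.1 h.le)
  have hmi : Integrable m := hcont.integrable_of_hasCompactSupport hcs
  have hodd : ∫ u, m u * u = 0 := by
    have h1 := integral_neg_eq_self (fun u => m u * u) volume
    simp only [heven, mul_neg] at h1
    rw [integral_neg] at h1
    linarith
  set S := ∑ i ∈ Finset.range p, ‖P (i + 1) - P i‖ with hS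
  -- length of `f`
  have hf1 : ENNReal.ofReal S ≤ eVariationOn (fbarP p P) (Set.Icc 0 (p : ℝ)) := by
    refine le_eVar_of p P _ fun r hr => ?_
    have := fbarP_node p hp P r hr r (by simp)
    simpa using this
  obtain ⟨K, hK⟩ := ellP_shift p hp P
  have hf2 : eVariationOn (fbarP p P) (Set.Icc 0 (p : ℝ)) ≤ ENNReal.ofReal S := by
    refine (eVar_le_of _ _ _ (fbarP_le p hp P)).trans (le_of_eq ?_)
    have := hK 0 (by simp)
    simp only [sub_zero, zero_mul, add_zero] at this
    rw [this]
  have hconv : ∀ t, FconvP ε φ p P t = ∫ u, m u • fbarP p P (t - u) := fun t => by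
    unfold FconvP
    rw [← hm, ← integral_sub_left_eq_self (fun u => m u • fbarP p P (t - u)) volume t]
    simp
  have hfc := fbarP_cont p hp P
  have hec := ellP_cont p P
  have hI : ∀ t, Integrable (fun u => m u • fbarP p P (t - u)) := fun t =>
    int_smul_cont m hcont hcs _ (by fun_prop)
  have hJ : ∀ t, Integrable (fun u => m u • ellP p P (t - u)) := fun t =>
    int_smul_cont m hcont hcs _ (by fun_prop)
  constructor
  · refine le_trans ?_ hf1
    refine (eVar_le_of _ (fun t => ∫ u, m u • ellP p P (t - u)) _ ?_).trans (le_of_eq ?_)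
    · intro a b hab
      rw [hconv, hconv, ← integral_sub (hI b) (hI a), ← integral_sub (hJ b) (hJ a)]
      refine norm_integral_le_of_norm_le ((hJ b).sub (hJ a)) (Eventually.of_forall fun u => ?_)
      simp only [smul_eq_mul]
      rw [← smul_sub, ← mul_sub, norm_smul, Real.norm_of_nonneg (hnn u)]
      exact mul_le_mul_of_nonneg_left (fbarP_le p hp P _ _ (by linarith)) (hnn u)
    · congr 1
      rw [← integral_sub (hJ _) (hJ _)]
      have : ∀ u, m u • ellP p P (p - u) - m u • ellP p P (0 - u) = m u * S + (m u * u) * K := by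
        intro u
        rcases lt_or_ge |u| 1 with h | h
        · rw [← smul_sub, hK u h, smul_eq_mul]; ring
        · rw [hz u h]; simp
      simp_rw [this]
      have hmu : Integrable (fun u => m u * u) :=
        int_smul_cont m hcont hcs (fun u => u) continuous_id
      rw [integral_add (hmi.mul_const S) (hmu.mul_const K),
        integral_mul_const, integral_mul_const, hint, hodd]
      simp
  · refine hf2.trans (le_eVar_of p P _ fun r hr => ?_)
    have i1 : Integrable (fun s => m ((r : ℝ) - s) • fbarP p P s) := by
      have := (hI r).comp_sub_left (r : ℝ)
      simpa using this
    have i2 : Integrable (fun s => (((r : ℝ) - s) * m ((r : ℝ) - s)) • DfbarP p P s) := by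
      have h0 : Integrable (fun s => ((r : ℝ) - s) * m ((r : ℝ) - s)) := by
        have := (int_smul_cont m hcont hcs (fun u => u) continuous_id).comp_sub_left (r : ℝ)
        simpa [mul_comm] using this
      exact h0.smul_bdd S (DfbarP_meas p P).aestronglyMeasurable
        (Eventually.of_forall (DfbarP_bdd p hp P))
    unfold FhatP FconvP DdirP
    rw [← hm, ← integral_add i1 i2]
    have : ∀ s, m ((r : ℝ) - s) • fbarP p P s + (((r : ℝ) - s) * m ((r : ℝ) - s)) • DfbarP p P s
        = m ((r : ℝ) - s) • P r := by
      intro s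
      rcases lt_or_ge |(r : ℝ) - s| 1 with h | h
      · rw [← fbarP_node p hp P r hr s h, smul_add, smul_smul, mul_comm (m _)]
      · rw [hz _ h]; simp
    simp_rw [this]
    rw [integral_smul_const, integral_sub_left_eq_self m volume (r : ℝ), hint, one_smul]
end
end

section
/- Let f : ℝ → ℝ^n be Lipschitz and differentiable almost everywhere with locally integrable derivative Df, let φ be a nonnegative mollifier on ℝ with supp φ = [−1,1], and for γ ∈ ℝ and ε > 0 define G_ε^γ := γ·F̂_ε + (1−γ)·F_ε = F_ε + γ·D_ε. Then for every γ ∈ ℝ and ε > 0, G_ε^γ ∈ C^∞(ℝ, ℝ^n), and as ε → 0⁺, G_ε^γ → f pointwise and uniformly on compact subsets of ℝ. -/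
open MeasureTheory Filter Topology

noncomputable section

/-- The combined mollification `G_ε^γ = F_ε + γ·D_ε` of a curve `f` with
almost-everywhere derivative `Df`. -/
def Gcomb {n : ℕ} (ε γ : ℝ) (φ : ℝ → ℝ) (f Df : ℝ → Euc n) : ℝ → Euc n :=
  fun t => (∫ s, mollR ε φ (t - s) • f s)
    + γ • (∫ s, ((t - s) * mollR ε φ (t - s)) • Df s)

section Helpers

variable {φ : ℝ → ℝ}

lemma mollR_contDiff (h : ContDiff ℝ (⊤ : ℕ∞) φ) (ε : ℝ) :
    ContDiff ℝ (⊤ : ℕ∞) (mollR ε φ) := by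
  unfold mollR
  exact contDiff_const.mul (h.comp (contDiff_id.div_const ε))

lemma mollR_zero (hs : tsupport φ = Set.Icc (-1 : ℝ) 1) {ε : ℝ} (hε : 0 < ε) {x : ℝ}
    (hx : ε < |x|) : mollR ε φ x = 0 := by
  have : x / ε ∉ tsupport φ := by
    rw [hs, Set.mem_Icc, ← abs_le, abs_div, abs_of_pos hε, div_le_one hε]
    exact not_le.2 hx
  simp [mollR, image_eq_zero_of_notMem_tsupport this]

lemma mollR_compact (hs : tsupport φ = Set.Icc (-1 : ℝ) 1) {ε : ℝ} (hε : 0 < ε) :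
    HasCompactSupport (mollR ε φ) := by
  refine HasCompactSupport.intro (isCompact_Icc (a := -ε) (b := ε)) fun x hx => ?_
  rw [Set.mem_Icc, ← abs_le, not_le] at hx
  exact mollR_zero hs hε hx

lemma mollR_integral (hi : ∫ x, φ x = 1) {ε : ℝ} (hε : 0 < ε) (t : ℝ) :
    ∫ s, mollR ε φ (t - s) = 1 := by
  rw [integral_sub_left_eq_self (mollR ε φ) volume t]
  unfold mollR
  rw [integral_const_mul, Measure.integral_comp_div, hi, abs_of_pos hε]
  simp [hε.ne']

lemma conv_smooth {n : ℕ} {g : ℝ → ℝ} {f : ℝ → Euc n} (hg : ContDiff ℝ (⊤ : ℕ∞) g)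
    (hc : HasCompactSupport g) (hf : LocallyIntegrable f volume) :
    ContDiff ℝ (⊤ : ℕ∞) (fun t => ∫ s, g (t - s) • f s) :=
  hc.contDiff_convolution_right (ContinuousLinearMap.lsmul ℝ ℝ).flip hf hg

lemma Gcomb_bound {n : ℕ} {f : ℝ → Euc n} {L : NNReal} (hf : LipschitzWith L f)
    {Df : ℝ → Euc n} (hDf : ∀ᵐ x ∂(volume : Measure ℝ), HasDerivAt f (Df x) x)
    (h : ContDiff ℝ (⊤ : ℕ∞) φ) (hi : ∫ x, φ x = 1) (h0 : ∀ x, 0 ≤ φ x)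
    (hs : tsupport φ = Set.Icc (-1 : ℝ) 1) {ε : ℝ} (hε : 0 < ε) (γ t : ℝ) :
    ‖Gcomb ε γ φ f Df t - f t‖ ≤ ε * (L * (1 + |γ|)) := by
  have hm := (mollR_contDiff h ε).continuous
  have hc := mollR_compact hs hε
  have hm0 : ∀ x, 0 ≤ mollR ε φ x := fun x => mul_nonneg (inv_nonneg.2 hε.le) (h0 _)
  have hint : Integrable (fun s => mollR ε φ (t - s)) :=
    (hm.integrable_of_hasCompactSupport hc).comp_sub_left t
  have hc' : HasCompactSupport (fun s => mollR ε φ (t - s)) :=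
    hc.comp_homeomorph (Homeomorph.subLeft t)
  have hmt : Continuous (fun s => mollR ε φ (t - s)) := by fun_prop
  have hintf : Integrable (fun s => mollR ε φ (t - s) • f s) :=
    (hmt.smul hf.continuous).integrable_of_hasCompactSupport hc'.smul_right
  have hK : ∫ s, mollR ε φ (t - s) * (ε * L) = ε * L := by
    rw [integral_mul_const, mollR_integral hi hε, one_mul]
  have key : ∀ s, mollR ε φ (t - s) * |t - s| ≤ mollR ε φ (t - s) * ε := by
    intro s
    rcases le_or_gt |t - s| ε with h1 | h1
    · exact mul_le_mul_of_nonneg_left h1 (hm0 _)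
    · simp [mollR_zero hs hε h1]
  have h1 : ‖(∫ s, mollR ε φ (t - s) • f s) - f t‖ ≤ ε * L := by
    have e : (∫ s, mollR ε φ (t - s) • f s) - f t
        = ∫ s, mollR ε φ (t - s) • (f s - f t) := by
      simp_rw [smul_sub]
      rw [integral_sub hintf (hint.smul_const _), integral_smul_const,
        mollR_integral hi hε, one_smul]
    rw [e, ← hK]
    refine norm_integral_le_of_norm_le (hint.mul_const _) (Eventually.of_forall fun s => ?_)
    have h2 := hf.norm_sub_le s t
    rw [Real.norm_eq_abs, abs_sub_comm] at h2
    rw [norm_smul, Real.norm_of_nonneg (hm0 _)]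
    calc _ ≤ mollR ε φ (t - s) * (L * |t - s|) := mul_le_mul_of_nonneg_left h2 (hm0 _)
      _ = (mollR ε φ (t - s) * |t - s|) * L := by ring
      _ ≤ (mollR ε φ (t - s) * ε) * L := mul_le_mul_of_nonneg_right (key s) L.2
      _ = _ := by ring
  have h2 : ‖∫ s, ((t - s) * mollR ε φ (t - s)) • Df s‖ ≤ ε * L := by
    rw [← hK]
    refine norm_integral_le_of_norm_le (hint.mul_const _) (hDf.mono fun s hd => ?_)
    have h3 : ‖Df s‖ ≤ L := by
      rw [← hd.deriv]; exact norm_deriv_le_of_lipschitz hf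
    rw [norm_smul, norm_mul, Real.norm_of_nonneg (hm0 _), Real.norm_eq_abs]
    calc _ = (mollR ε φ (t - s) * |t - s|) * ‖Df s‖ := by ring
      _ ≤ (mollR ε φ (t - s) * ε) * L :=
        mul_le_mul (key s) h3 (norm_nonneg _) (mul_nonneg (hm0 _) hε.le)
      _ = _ := by ring
  have e : Gcomb ε γ φ f Df t - f t = ((∫ s, mollR ε φ (t - s) • f s) - f t)
      + γ • (∫ s, ((t - s) * mollR ε φ (t - s)) • Df s) := by
    unfold Gcomb; abel
  rw [e]
  refine (norm_add_le _ _).trans ?_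
  rw [norm_smul, Real.norm_eq_abs]
  have := mul_le_mul_of_nonneg_left h2 (abs_nonneg γ)
  linarith

end Helpers

theorem stmt16 (n : ℕ) (f : ℝ → Euc n) (L : NNReal)
    -- `f` is Lipschitz
    (hf : LipschitzWith L f)
    -- `f` is differentiable a.e. with locally integrable derivative `Df`
    (Df : ℝ → Euc n)
    (hDf : ∀ᵐ x ∂(volume : Measure ℝ), HasDerivAt f (Df x) x)
    (hDf_loc : LocallyIntegrable Df volume)
    -- `φ` is a nonnegative mollifier on `ℝ` with support `[-1,1]`
    (φ : ℝ → ℝ) (hφ_smooth : ContDiff ℝ (⊤ : ℕ∞) φ)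
    (hφ_int : ∫ x, φ x = 1) (hφ_nonneg : ∀ x, 0 ≤ φ x)
    (hφ_supp : tsupport φ = Set.Icc (-1 : ℝ) 1) :
    -- `G_ε^γ` is `C^∞` ...
    (∀ γ : ℝ, ∀ ε : ℝ, 0 < ε → ContDiff ℝ (⊤ : ℕ∞) (Gcomb ε γ φ f Df))
    -- ... converges pointwise to `f` as `ε → 0⁺` ...
    ∧ (∀ γ : ℝ, ∀ t : ℝ,
        Tendsto (fun ε : ℝ => Gcomb ε γ φ f Df t) (𝓝[>] 0) (𝓝 (f t)))
    -- ... and uniformly on compact subsets of `ℝ`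
    ∧ (∀ γ : ℝ, ∀ K : Set ℝ, IsCompact K →
        TendstoUniformlyOn (fun (ε : ℝ) (t : ℝ) => Gcomb ε γ φ f Df t) f
          (𝓝[>] 0) K) := by
  have hunif : ∀ γ : ℝ, TendstoUniformly (fun (ε : ℝ) (t : ℝ) => Gcomb ε γ φ f Df t) f
      (𝓝[>] 0) := by
    intro γ
    rw [Metric.tendstoUniformly_iff]
    intro δ hδ
    have ht : Tendsto (fun ε : ℝ => ε * (L * (1 + |γ|))) (𝓝[>] 0) (𝓝 0) := by
      have : Continuous (fun ε : ℝ => ε * (L * (1 + |γ|))) := by fun_prop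
      simpa using (this.tendsto 0).mono_left nhdsWithin_le_nhds
    filter_upwards [ht.eventually_lt_const hδ, self_mem_nhdsWithin] with ε h1 h2 t
    rw [dist_comm, dist_eq_norm]
    exact (Gcomb_bound hf hDf hφ_smooth hφ_int hφ_nonneg hφ_supp h2 γ t).trans_lt h1
  refine ⟨fun γ ε hε => ?_, fun γ t => (hunif γ).tendsto_at t,
    fun γ K _ => (hunif γ).tendstoUniformlyOn⟩
  have hm := mollR_contDiff hφ_smooth ε
  have hc := mollR_compact hφ_supp hε
  have hA := conv_smooth hm hc hf.continuous.locallyIntegrable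
  have hB := conv_smooth (g := fun x => x * mollR ε φ x) (contDiff_id.mul hm)
    (HasCompactSupport.mul_left hc) hDf_loc
  exact hA.add (hB.const_smul γ)
end
end
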